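/- arXiv:1704.07095 — 3 statements merged into one kernel-verified Lean document; each statement's English description precedes it below -/
import Mathlib

section
/- Let X be a nontrivial real Banach space and ε ∈ (0,2). Suppose x ∈ X with ‖x‖ ≤ 1 and x* is a continuous linear functional on X with ‖x*‖ ≤ 1 and x*(x) ≥ 1 − ε. Then there exist y ∈ X with ‖y‖ = 1 and a continuous linear functional y* on X with y*(y) = ‖y*‖ such that max{ ‖x − y‖, ‖x* − y*‖ } ≤ √ε. -/
/-!
The proof is the Brøndsted–Rockafellar argument for the indicator function of the closed unit ball,
with `s = √ε`. Since `xs ≤ 1 ≤ xs x + ε` on the ball, Ekeland's variational principle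
(`exists_ekeland`) produces `y` in the ball with `‖x - y‖ ≤ ε / s = s` and
`xs z - xs y ≤ s * ‖z - y‖` for all `z` in the ball. A Hahn–Banach sandwich argument
(`exists_sandwich`) places a linear functional `g` between the two sides; then `‖g‖ ≤ s` and
`ys = xs - g` attains its maximum over the ball, hence its norm, at `y`.

If `ys ≠ 0`, this forces `‖y‖ = 1`. If `ys = 0`, then `‖xs‖ ≤ s`, and `1 - s² ≤ xs x ≤ s * ‖x‖`
gives `1 - ‖x‖ ≤ s`, so the zero functional together with the normalization of `x` will do.
-/

open Filter Topology

/-- Ekeland's variational principle, for maximization of a continuous function. -/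
lemma exists_ekeland {C : Type*} [MetricSpace C] [CompleteSpace C] (f : C → ℝ)
    (hf : Continuous f) (M : ℝ) (hM : ∀ z, f z ≤ M) (s : ℝ) (hs : 0 < s) (x : C) :
    ∃ y, s * dist x y ≤ f y - f x ∧ ∀ z, f z - f y ≤ s * dist y z := by
  have step : ∀ (w : C) (n : ℕ), ∃ v, s * dist w v ≤ f v - f w ∧
      ∀ z, s * dist w z ≤ f z - f w → f z ≤ f v + 1 / ((n : ℝ) + 1) := by
    intro w n
    set A : Set ℝ := f '' {z | s * dist w z ≤ f z - f w} with hA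
    have hne : A.Nonempty := ⟨f w, w, by simp, rfl⟩
    have hbd : BddAbove A := ⟨M, by rintro _ ⟨z, _, rfl⟩; exact hM z⟩
    have hpos : (0 : ℝ) < 1 / ((n : ℝ) + 1) := by positivity
    obtain ⟨_, ⟨v, hv, rfl⟩, hlt⟩ := exists_lt_of_lt_csSup hne (sub_lt_self (sSup A) hpos)
    refine ⟨v, hv, fun z hz => ?_⟩
    have := le_csSup hbd (⟨z, hz, rfl⟩ : f z ∈ A)
    linarith
  choose next hnext hmax using step
  let w : ℕ → C := fun n => Nat.rec x (fun n v => next v n) n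
  have hmono : Monotone (fun n => f (w n)) := by
    refine monotone_nat_of_le_succ fun n => ?_
    have h1 : s * dist (w n) (w (n + 1)) ≤ f (w (n + 1)) - f (w n) := hnext (w n) n
    have h2 : 0 ≤ s * dist (w n) (w (n + 1)) := by positivity
    linarith
  have hdist : ∀ n m, n ≤ m → s * dist (w n) (w m) ≤ f (w m) - f (w n) := by
    intro n m h
    induction m, h using Nat.le_induction with
    | base => simp
    | succ m h ih =>
      have h1 : s * dist (w m) (w (m + 1)) ≤ f (w (m + 1)) - f (w m) := hnext (w m) m
      have h2 := mul_le_mul_of_nonneg_left (dist_triangle (w n) (w m) (w (m + 1))) hs.le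
      linarith
  have hbd : BddAbove (Set.range fun n => f (w n)) := ⟨M, by rintro _ ⟨n, rfl⟩; exact hM _⟩
  have hlim := tendsto_atTop_ciSup hmono hbd
  have hle : ∀ n, f (w n) ≤ ⨆ n, f (w n) := fun n => le_ciSup hbd n
  set l := ⨆ n, f (w n)
  have hcau : CauchySeq w := by
    refine cauchySeq_of_le_tendsto_0 (fun N => (l - f (w N)) / s) ?_ ?_
    · intro n m N hn hm
      rw [le_div_iff₀ hs]
      have h1 : f (w N) ≤ f (w n) := hmono hn
      have h2 : f (w N) ≤ f (w m) := hmono hm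
      rcases le_total n m with h | h
      · linarith [hdist n m h, hle m]
      · rw [dist_comm]
        linarith [hdist m n h, hle n]
    · simpa using (hlim.const_sub l).div_const s
  obtain ⟨y, hy⟩ := cauchySeq_tendsto_of_complete hcau
  have hfy : Tendsto (fun n => f (w n)) atTop (𝓝 (f y)) := (hf.tendsto y).comp hy
  have hyn : ∀ n, s * dist (w n) y ≤ f y - f (w n) := fun n =>
    le_of_tendsto_of_tendsto ((tendsto_const_nhds.dist hy).const_mul s) (hfy.sub_const _)
      (eventually_atTop.2 ⟨n, fun m hm => hdist n m hm⟩)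
  refine ⟨y, hyn 0, fun z => ?_⟩
  by_contra! hz
  -- A point `z` violating the inequality competes at every step, so `f z ≤ f y`.
  have hzn : ∀ n, f z ≤ f (w (n + 1)) + 1 / ((n : ℝ) + 1) := by
    intro n
    refine hmax (w n) n z ?_
    have h2 := mul_le_mul_of_nonneg_left (dist_triangle (w n) y z) hs.le
    linarith [hyn n]
  have hlim2 : Tendsto (fun n : ℕ => f (w (n + 1)) + 1 / ((n : ℝ) + 1)) atTop (𝓝 (f y + 0)) :=
    (hfy.comp (tendsto_add_atTop_nat 1)).add tendsto_one_div_add_atTop_nhds_zero_nat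
  have h1 := ge_of_tendsto' hlim2 hzn
  have h2 : 0 ≤ s * dist y z := by positivity
  linarith

/-- A continuous linear functional that is dominated by `s * ‖·‖` on a convex set `D` containing `0`
is dominated on `D` by a continuous linear functional of norm at most `s`. -/
lemma exists_sandwich {X : Type*} [NormedAddCommGroup X] [NormedSpace ℝ X] (f : X →L[ℝ] ℝ)
    (s : ℝ) (hs : 0 ≤ s) (D : Set X) (hD : Convex ℝ D) (h0 : (0 : X) ∈ D)
    (h : ∀ w ∈ D, f w ≤ s * ‖w‖) :
    ∃ g : X →L[ℝ] ℝ, ‖g‖ ≤ s ∧ ∀ w ∈ D, f w ≤ g w := by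
  -- The strict epigraph of `s * ‖·‖` is disjoint from the hypograph of `f` over `D`.
  have hA : Convex ℝ {p : X × ℝ | s * ‖p.1‖ < p.2} := by
    have hc : ConvexOn ℝ Set.univ (fun z : X => s * ‖z‖) := by
      simpa [smul_eq_mul] using (convexOn_univ_norm (E := X)).smul hs
    simpa using hc.convex_strict_epigraph
  have hAo : IsOpen {p : X × ℝ | s * ‖p.1‖ < p.2} :=
    isOpen_lt (by fun_prop) (by fun_prop)
  have hB : Convex ℝ {p : X × ℝ | p.1 ∈ D ∧ p.2 ≤ f p.1} :=
    (f.toLinearMap.concaveOn hD).convex_hypograph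
  obtain ⟨φ, u, hφA, hφB⟩ := geometric_hahn_banach_open hA hAo hB <| by
    rw [Set.disjoint_left]
    rintro p hp ⟨hp1, hp2⟩
    exact absurd (h p.1 hp1) (not_le.2 (lt_of_lt_of_le hp hp2))
  have hsplit : ∀ (w : X) (r : ℝ), φ (w, r) = φ (w, 0) + r * φ (0, 1) := by
    intro w r
    have : ((w, r) : X × ℝ) = (w, 0) + r • (0, 1) := by simp
    rw [this, map_add, map_smul, smul_eq_mul]
  have hu : u ≤ 0 := by
    have := hφB (0, 0) ⟨h0, by simp⟩
    rwa [← Prod.zero_eq_mk, map_zero] at this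
  have hc : φ (0, 1) < 0 := lt_of_lt_of_le (hφA (0, 1) (by simp)) hu
  have hu0 : u = 0 := by
    refine le_antisymm hu (le_of_not_gt fun hneg => ?_)
    have h1 := hφA (0, u / φ (0, 1)) (by simpa using div_pos_of_neg_of_neg hneg hc)
    rw [hsplit, div_mul_cancel₀ _ hc.ne, ← Prod.zero_eq_mk, map_zero] at h1
    linarith
  subst hu0
  set c := -φ (0, 1) with hcdef
  have hcpos : 0 < c := by linarith
  let g : X →L[ℝ] ℝ := c⁻¹ • φ.comp (ContinuousLinearMap.inl ℝ X ℝ)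
  have hg : ∀ w, φ (w, 0) = c * g w := by
    intro w
    simp [g, hcpos.ne']
  have hgs : ∀ w, g w ≤ s * ‖w‖ := by
    intro w
    refine le_of_forall_gt_imp_ge_of_dense fun r hr => ?_
    have h1 := hφA (w, r) hr
    rw [hsplit, hg] at h1
    nlinarith
  refine ⟨g, g.opNorm_le_bound hs fun w => ?_, fun w hw => ?_⟩
  · rw [Real.norm_eq_abs, abs_le]
    have := hgs (-w)
    rw [map_neg, norm_neg] at this
    exact ⟨by linarith, hgs w⟩
  · have h1 := hφB (w, f w) ⟨hw, le_rfl⟩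
    rw [hsplit, hg] at h1
    nlinarith

/-- Modified Bishop–Phelps–Bollobás theorem: the approximating functional attains
its norm at `y` but is not required to have norm one. -/
theorem modified_bishop_phelps_bollobas
    (X : Type*) [NormedAddCommGroup X] [NormedSpace ℝ X] [CompleteSpace X] [Nontrivial X]
    (ε : ℝ) (hε : ε ∈ Set.Ioo (0 : ℝ) 2)
    (x : X) (hx : ‖x‖ ≤ 1)
    (xs : X →L[ℝ] ℝ) (hxs : ‖xs‖ ≤ 1) (hxsx : 1 - ε ≤ xs x) :
    ∃ (y : X) (ys : X →L[ℝ] ℝ), ‖y‖ = 1 ∧ ys y = ‖ys‖ ∧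
      max ‖x - y‖ ‖xs - ys‖ ≤ Real.sqrt ε := by
  set s := Real.sqrt ε with hsdef
  have hs : 0 < s := Real.sqrt_pos.2 hε.1
  have hss : s * s = ε := Real.mul_self_sqrt hε.1.le
  have hxs1 : ∀ z : X, ‖z‖ ≤ 1 → xs z ≤ 1 := fun z hz =>
    (le_abs_self _).trans ((xs.le_of_opNorm_le_of_le hxs hz).trans (by norm_num))
  let C := Metric.closedBall (0 : X) 1
  have : CompleteSpace C := Metric.isClosed_closedBall.completeSpace_coe
  obtain ⟨⟨y, hyC⟩, hxy, hmax⟩ := exists_ekeland (fun z : C => xs z) (by fun_prop) 1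
    (fun z => hxs1 z (mem_closedBall_zero_iff.1 z.2)) s hs ⟨x, mem_closedBall_zero_iff.2 hx⟩
  have hy : ‖y‖ ≤ 1 := mem_closedBall_zero_iff.1 hyC
  simp only [Subtype.dist_eq, dist_eq_norm] at hxy hmax
  have hxy' : ‖x - y‖ ≤ s := by
    have h1 := hxs1 y hy
    refine le_of_mul_le_mul_left ?_ hs
    linarith
  obtain ⟨g, hgs, hg⟩ := exists_sandwich xs s hs.le ((fun w => y + w) ⁻¹' C)
    ((convex_closedBall (0 : X) 1).translate_preimage_right y) (by simpa [C] using hy) <| by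
      intro w hw
      have := hmax ⟨y + w, hw⟩
      simpa using this
  have hys : ∀ z : X, ‖z‖ ≤ 1 → (xs - g) z ≤ (xs - g) y := by
    intro z hz
    have := hg (z - y) (by simpa [C] using hz)
    simp only [map_sub, sub_apply] at this ⊢
    linarith
  have hnorm : ‖xs - g‖ ≤ (xs - g) y := by
    refine ContinuousLinearMap.opNorm_le_of_unit_norm ?_ fun z hz => ?_
    · simpa using hys 0 (by simp)
    · rw [Real.norm_eq_abs]
      refine abs_le'.2 ⟨hys z hz.le, ?_⟩
      rw [← map_neg]
      exact hys (-z) (by rw [norm_neg]; exact hz.le)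
  have hnorm' : (xs - g) y ≤ ‖xs - g‖ * ‖y‖ := (le_abs_self _).trans ((xs - g).le_opNorm y)
  by_cases hz : xs - g = 0
  · have hxsn : ‖xs‖ ≤ s := by rwa [sub_eq_zero.1 hz]
    have h1 : xs x ≤ s * ‖x‖ := (le_abs_self _).trans (xs.le_of_opNorm_le hxsn x)
    have h2 : 1 - ‖x‖ ≤ s := by nlinarith [norm_nonneg x]
    obtain ⟨v, hv, hxv⟩ : ∃ v : X, ‖v‖ = 1 ∧ ‖x - v‖ = 1 - ‖x‖ := by
      by_cases hx0 : x = 0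
      · obtain ⟨v, hv⟩ := exists_norm_eq X zero_le_one
        exact ⟨v, hv, by simp [hx0, hv]⟩
      · have hxn : 0 < ‖x‖ := norm_pos_iff.2 hx0
        refine ⟨‖x‖⁻¹ • x, by rw [norm_smul, norm_inv, norm_norm, inv_mul_cancel₀ hxn.ne'], ?_⟩
        have h3 : x - ‖x‖⁻¹ • x = (1 - ‖x‖⁻¹) • x := by rw [sub_smul, one_smul]
        have h4 : 1 ≤ ‖x‖⁻¹ := (one_le_inv₀ hxn).2 hx
        rw [h3, norm_smul, Real.norm_eq_abs, abs_of_nonpos (by linarith)]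
        field_simp
        ring
    exact ⟨v, 0, hv, by simp, max_le (hxv.trans_le h2) (by simpa using hxsn)⟩
  · have hpos : 0 < ‖xs - g‖ := norm_pos_iff.2 hz
    have hy1 : ‖y‖ = 1 := le_antisymm hy (by nlinarith)
    refine ⟨y, xs - g, hy1, le_antisymm (by simpa [hy1] using hnorm') hnorm, ?_⟩
    exact max_le hxy' (by simpa using hgs)
end

section
/- Let X and Y be real Banach spaces, Y nontrivial, such that Y has property β with parameter ρ ∈ [0,1). Then for every ε ∈ (0,1) the modified Bishop–Phelps–Bollobás moduli satisfy Φ̃^S(X,Y,ε) ≤ Φ̃(X,Y,ε) ≤ min{ √ε·√((1+ρ)/(1−ρ)), 1 }. -/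
/-!
The modulus is bounded by `1` because `F = 0` together with `y = x / ‖x‖` is always admissible.
So put `s = √ε √((1 + ρ)/(1 - ρ))` and `k = ε / s`, so that `s * (1 - ρ) = k * (1 + ρ)`, and
assume `s < 1`.

Choose an index `α` with `|y*_α (T x)| > 1 - ε` and let `φ = y*_α ∘ T`. The Bishop–Phelps argument
(`exists_bishopPhelps_maximal`, a maximal element for the order defined by a cone, followed by the
separation argument `exists_support_functional`) gives a functional `ψ` attaining its norm at a
unit vector `y` with `‖ψ - φ‖ ≤ k₀` and `‖x - y‖ < s`, where `k₀ = (‖φ‖ - (1 - ε)) / s`.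
Lengthening `ψ` by `s - k₀` yields `χ`, which attains its norm at `y`, satisfies `‖χ - φ‖ ≤ s`, and
has norm at least `1 + s - 2 * k`. The operator
`F z = (1 - k) T z + (χ z - (1 - k) φ z) y_α` then does the job. Its `α`-component is `χ`, and the
rank-one part has norm at most `s + k`. The other components of `F` are therefore bounded by
`(1 - k) + ρ (s + k) = 1 + s - 2 * k ≤ ‖χ‖`, so that `F` attains its norm at `y`, and those of
`T - F` are bounded by `k + ρ (s + k) = s`. Shrinking `T` off the `α`-component, instead of only
increasing the `α`-component, is what gives the stated constant.
-/

noncomputable section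

/-- Property β of Lindenstrauss with parameter `ρ`. -/
def PropertyBeta (Y : Type u) [NormedAddCommGroup Y] [NormedSpace ℝ Y] (ρ : ℝ) : Prop :=
  ∃ (Λ : Type u) (yv : Λ → Y) (yf : Λ → (Y →L[ℝ] ℝ)),
    (∀ α, ‖yv α‖ = 1) ∧ (∀ α, ‖yf α‖ = 1) ∧ (∀ α, yf α (yv α) = 1) ∧
    (∀ α γ, α ≠ γ → |yf α (yv γ)| ≤ ρ) ∧
    (∀ v : Y, IsLUB (Set.range fun α => |yf α v|) ‖v‖)

/-- The modified Bishop–Phelps–Bollobás modulus `Φ̃(X,Y,ε)`: the approximating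
operator `F` attains its norm but is not required to have norm one. -/
def PhiTilde (X Y : Type*) [NormedAddCommGroup X] [NormedSpace ℝ X]
    [NormedAddCommGroup Y] [NormedSpace ℝ Y] (ε : ℝ) : ℝ :=
  sInf {δ : ℝ | 0 < δ ∧ ∀ (x : X) (T : X →L[ℝ] Y), ‖x‖ ≤ 1 → ‖T‖ ≤ 1 → 1 - ε < ‖T x‖ →
    ∃ (y : X) (F : X →L[ℝ] Y), ‖y‖ = 1 ∧ ‖F y‖ = ‖F‖ ∧ ‖x - y‖ < δ ∧ ‖T - F‖ < δ}

/-- The modified spherical Bishop–Phelps–Bollobás modulus `Φ̃^S(X,Y,ε)`. -/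
def PhiTildeS (X Y : Type*) [NormedAddCommGroup X] [NormedSpace ℝ X]
    [NormedAddCommGroup Y] [NormedSpace ℝ Y] (ε : ℝ) : ℝ :=
  sInf {δ : ℝ | 0 < δ ∧ ∀ (x : X) (T : X →L[ℝ] Y), ‖x‖ = 1 → ‖T‖ = 1 → 1 - ε < ‖T x‖ →
    ∃ (y : X) (F : X →L[ℝ] Y), ‖y‖ = 1 ∧ ‖F y‖ = ‖F‖ ∧ ‖x - y‖ < δ ∧ ‖T - F‖ < δ}

open Filter Topology

/-- The order argument of Bishop and Phelps: for `z ≤ w` meaning `k ‖w - z‖ ≤ φ w - φ z`, the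
closed unit ball of a Banach space has a maximal element above each of its points. -/
lemma exists_bishopPhelps_maximal {X : Type*} [NormedAddCommGroup X] [NormedSpace ℝ X]
    [CompleteSpace X] (φ : X →L[ℝ] ℝ) {k : ℝ} (hk : 0 < k) {x : X} (hx : ‖x‖ ≤ 1) :
    ∃ y : X, ‖y‖ ≤ 1 ∧ k * ‖y - x‖ ≤ φ y - φ x ∧
      ∀ z : X, ‖z‖ ≤ 1 → φ z - φ y ≤ k * ‖z - y‖ := by
  have trans : ∀ a b c : X, k * ‖b - a‖ ≤ φ b - φ a → k * ‖c - b‖ ≤ φ c - φ b →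
      k * ‖c - a‖ ≤ φ c - φ a := by
    intro a b c h1 h2
    have h3 : ‖c - a‖ ≤ ‖c - b‖ + ‖b - a‖ := norm_sub_le_norm_sub_add_norm_sub c b a
    nlinarith
  have bdd : ∀ z : X, ‖z‖ ≤ 1 → φ z ≤ ‖φ‖ := by
    intro z hz
    have h1 := φ.le_opNorm z
    have h2 := le_abs_self (φ z)
    rw [Real.norm_eq_abs] at h1
    nlinarith [norm_nonneg φ]
  let S := {z : X // ‖z‖ ≤ 1 ∧ k * ‖z - x‖ ≤ φ z - φ x}
  let r : S → S → Prop := fun a b => k * ‖b.1 - a.1‖ ≤ φ b.1 - φ a.1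
  have chains : ∀ c : Set S, IsChain r c → ∃ ub, ∀ a ∈ c, r a ub := by
    intro c hc
    rcases c.eq_empty_or_nonempty with rfl | hne
    · exact ⟨⟨x, hx, by simp⟩, by simp⟩
    let f : S → ℝ := fun z => φ z.1
    have hbdd : BddAbove (f '' c) := ⟨‖φ‖, by rintro _ ⟨z, -, rfl⟩; exact bdd z.1 z.2.1⟩
    -- any two members of the chain are at distance controlled by the difference of their values
    have comp : ∀ a ∈ c, ∀ b ∈ c, k * ‖a.1 - b.1‖ ≤ |φ a.1 - φ b.1| := by
      intro a ha b hb
      rcases eq_or_ne a b with rfl | hab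
      · simp
      rcases hc ha hb hab with h | h
      · rw [norm_sub_rev, abs_sub_comm]; exact h.trans (le_abs_self _)
      · exact h.trans (le_abs_self _)
    obtain ⟨u, -, hu, huc⟩ := exists_seq_tendsto_sSup (hne.image f) hbdd
    choose z hzc hzu using huc
    have hcau : CauchySeq (fun n => (z n).1) := by
      rw [Metric.cauchySeq_iff]
      intro e he
      obtain ⟨N, hN⟩ := Metric.cauchySeq_iff.1 hu.cauchySeq (k * e) (by positivity)
      refine ⟨N, fun a ha b hb => ?_⟩
      have h1 := comp _ (hzc a) _ (hzc b)
      have h2 := hN a ha b hb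
      rw [Real.dist_eq, ← hzu a, ← hzu b] at h2
      rw [dist_eq_norm]
      exact lt_of_mul_lt_mul_left (h1.trans_lt h2) hk.le
    obtain ⟨w, hw⟩ := cauchySeq_tendsto_of_complete hcau
    have hφ : φ w = sSup (f '' c) := by
      refine tendsto_nhds_unique ((φ.continuous.tendsto w).comp hw) ?_
      convert hu using 1
      ext n
      exact hzu n
    have hub : ∀ a ∈ c, k * ‖w - a.1‖ ≤ φ w - φ a.1 := by
      intro a ha
      have h1 : φ a.1 ≤ φ w := hφ ▸ le_csSup hbdd ⟨a, ha, rfl⟩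
      rw [← abs_of_nonneg (sub_nonneg.2 h1)]
      refine le_of_tendsto_of_tendsto' ((hw.sub_const a.1).norm.const_mul k)
        ((((φ.continuous.tendsto w).comp hw).sub_const (φ a.1)).abs) fun n => ?_
      exact comp _ (hzc n) _ ha
    obtain ⟨a, ha⟩ := hne
    exact ⟨⟨w, le_of_tendsto' hw.norm fun n => (z n).2.1, trans _ _ _ a.2.2 (hub a ha)⟩, hub⟩
  obtain ⟨m, hm⟩ := exists_maximal_of_chains_bounded chains
    (fun {a b c} h1 h2 => trans a.1 b.1 c.1 h1 h2)
  refine ⟨m.1, m.2.1, m.2.2, fun z hz => ?_⟩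
  by_contra! hlt
  have h1 := hm ⟨z, hz, trans _ _ _ m.2.2 hlt.le⟩ hlt.le
  have h2 : 0 ≤ k * ‖m.1 - z‖ := by positivity
  have h3 : 0 ≤ k * ‖z - m.1‖ := by positivity
  dsimp only [r] at h1
  linarith

/-- If the concave function `φ - φ y` on the unit ball lies below the convex function `k ‖· - y‖`,
then a linear functional of norm at most `k` separates them, and subtracting it from `φ` makes
`y` a maximum point. -/
lemma exists_support_functional {X : Type*} [NormedAddCommGroup X] [NormedSpace ℝ X]
    (φ : X →L[ℝ] ℝ) {k : ℝ} (hk : 0 < k) {y : X} (hy : ‖y‖ ≤ 1)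
    (hmax : ∀ z : X, ‖z‖ ≤ 1 → φ z - φ y ≤ k * ‖z - y‖) :
    ∃ ψ : X →L[ℝ] ℝ, ‖ψ - φ‖ ≤ k ∧ ∀ z : X, ‖z‖ ≤ 1 → ψ z ≤ ψ y := by
  let A : Set (X × ℝ) := {p | k * ‖p.1 - y‖ < p.2}
  let B : Set (X × ℝ) := {p | ‖p.1‖ ≤ 1 ∧ p.2 ≤ φ p.1 - φ y}
  have hAo : IsOpen A := isOpen_lt (by fun_prop) (by fun_prop)
  have hAc : Convex ℝ A := by
    intro p hp q hq a b ha hb hab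
    simp only [A, Set.mem_ofPred_eq, Prod.fst_add, Prod.snd_add, Prod.smul_fst, Prod.smul_snd,
      smul_eq_mul] at hp hq ⊢
    have h1 : a • p.1 + b • q.1 - y = a • (p.1 - y) + b • (q.1 - y) := by
      rw [smul_sub, smul_sub, sub_add_sub_comm, ← add_smul, hab, one_smul]
    have h2 : ‖a • p.1 + b • q.1 - y‖ ≤ a * ‖p.1 - y‖ + b * ‖q.1 - y‖ := by
      rw [h1]
      refine (norm_add_le _ _).trans_eq ?_
      rw [norm_smul, norm_smul, Real.norm_of_nonneg ha, Real.norm_of_nonneg hb]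
    have h3 := mul_le_mul_of_nonneg_left h2 hk.le
    rcases ha.eq_or_lt with rfl | ha
    · nlinarith
    · nlinarith [mul_lt_mul_of_pos_left hp ha, mul_le_mul_of_nonneg_left hq.le hb]
  have hBc : Convex ℝ B := by
    intro p hp q hq a b ha hb hab
    refine ⟨?_, ?_⟩
    · have := (convex_closedBall (0 : X) 1) (x := p.1) (by simpa using hp.1) (y := q.1)
        (by simpa using hq.1) ha hb hab
      simpa using this
    · have h1 := mul_le_mul_of_nonneg_left hp.2 ha
      have h2 := mul_le_mul_of_nonneg_left hq.2 hb
      have h3 : φ y = a * φ y + b * φ y := by rw [← add_mul, hab, one_mul]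
      simp only [Prod.fst_add, Prod.snd_add, Prod.smul_fst, Prod.smul_snd, smul_eq_mul, map_add,
        map_smul]
      linarith
  have hdisj : Disjoint A B := by
    rw [Set.disjoint_left]
    intro p hp hq
    exact absurd ((hp.trans_le hq.2).trans_le (hmax p.1 hq.1)) (lt_irrefl _)
  obtain ⟨f, u, hfA, hfB⟩ := geometric_hahn_banach_open hAc hAo hBc hdisj
  -- `f` splits as a functional on `X` plus multiplication by a constant, which is negative
  let f₁ : X →L[ℝ] ℝ := f.comp (ContinuousLinearMap.inl ℝ X ℝ)
  let c : ℝ := f (0, 1)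
  have hf : ∀ z r, f (z, r) = f₁ z + r * c := by
    intro z r
    have : (z, r) = ((z, 0) : X × ℝ) + r • ((0, 1) : X × ℝ) := by simp
    rw [this, map_add, map_smul]
    rfl
  have hA : ∀ z r, k * ‖z - y‖ < r → f₁ z + r * c < u := fun z r h => hf z r ▸ hfA (z, r) h
  have hB : ∀ z, ‖z‖ ≤ 1 → u ≤ f₁ z + (φ z - φ y) * c :=
    fun z h => hf z (φ z - φ y) ▸ hfB (z, φ z - φ y) ⟨h, le_rfl⟩
  have hBy := hB y hy
  have hc : c < 0 := by
    have := hA y 1 (by simp)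
    simp only [sub_self, zero_mul] at hBy
    linarith
  have hA' : ∀ z, f₁ z + k * ‖z - y‖ * c ≤ u := by
    intro z
    refine le_of_forall_pos_lt_add fun e he => ?_
    have h1 := hA z (k * ‖z - y‖ + e / (-c)) (by
      have : 0 < e / (-c) := div_pos he (by linarith)
      linarith)
    have h2 : e / (-c) * c = -e := by rw [div_neg, neg_mul, div_mul_cancel₀ _ hc.ne]
    rw [add_mul, h2] at h1
    linarith
  have hAy := hA' y
  simp only [sub_self, norm_zero, zero_mul, mul_zero, add_zero] at hAy hBy
  -- after the normalisation `c = -1` the functional on `X` has norm at most `k`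
  let g : X →L[ℝ] ℝ := (-c)⁻¹ • f₁
  have hc' : 0 < (-c)⁻¹ := by rw [inv_pos]; linarith
  have hcc : (-c)⁻¹ * c = -1 := by rw [inv_neg, neg_mul, inv_mul_cancel₀ hc.ne]
  have hg : ∀ z, g z ≤ k * ‖z‖ := by
    intro z
    have h1 := hA' (z + y)
    rw [map_add, add_sub_cancel_right] at h1
    have h2 : f₁ z ≤ k * ‖z‖ * (-c) := by linarith
    have h3 := mul_le_mul_of_nonneg_left h2 hc'.le
    change (-c)⁻¹ * f₁ z ≤ _
    have h4 : (-c)⁻¹ * (k * ‖z‖ * (-c)) = k * ‖z‖ := by linear_combination (-(k * ‖z‖)) * hcc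
    linarith
  refine ⟨φ - g, ?_, fun z hz => ?_⟩
  · rw [sub_sub_cancel_left, norm_neg]
    refine g.opNorm_le_bound hk.le fun z => ?_
    rw [Real.norm_eq_abs, abs_le]
    have := hg (-z)
    rw [map_neg, norm_neg] at this
    exact ⟨by linarith, hg z⟩
  · have h1 : 0 ≤ f₁ z + (φ z - φ y) * c - f₁ y := by linarith [hB z hz]
    have h2 := mul_nonneg hc'.le h1
    change φ z - (-c)⁻¹ * f₁ z ≤ φ y - (-c)⁻¹ * f₁ y
    have h3 : (-c)⁻¹ * (f₁ z + (φ z - φ y) * c - f₁ y)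
        = (-c)⁻¹ * f₁ z - (φ z - φ y) - (-c)⁻¹ * f₁ y := by
      linear_combination (φ z - φ y) * hcc
    linarith

lemma exists_attaining_of_pos {X : Type*} [NormedAddCommGroup X] [NormedSpace ℝ X]
    [CompleteSpace X] (φ : X →L[ℝ] ℝ) {k : ℝ} (hk : 0 < k) (hkφ : k < ‖φ‖) {x : X}
    (hx : ‖x‖ ≤ 1) :
    ∃ (y : X) (ψ : X →L[ℝ] ℝ), ‖y‖ = 1 ∧ |ψ y| = ‖ψ‖ ∧ ‖ψ - φ‖ ≤ k ∧
      k * ‖x - y‖ ≤ ‖φ‖ - φ x := by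
  obtain ⟨y, hy, hyx, hmax⟩ := exists_bishopPhelps_maximal φ hk hx
  obtain ⟨ψ, hψ, hψy⟩ := exists_support_functional φ hk hy hmax
  have h0 : 0 ≤ ψ y := by simpa using hψy 0 (by simp)
  have hle : ‖ψ‖ ≤ ψ y := by
    refine ψ.opNorm_le_of_unit_norm h0 fun z hz => ?_
    rw [Real.norm_eq_abs, abs_le]
    have := hψy (-z) (by simp [hz])
    rw [map_neg] at this
    exact ⟨by linarith, hψy z hz.le⟩
  have hpos : 0 < ‖ψ‖ := by
    have := norm_sub_norm_le φ ψ
    rw [norm_sub_rev] at this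
    linarith
  have hψ' := ψ.le_opNorm y
  rw [Real.norm_eq_abs, abs_of_nonneg h0] at hψ'
  have hφ := φ.le_opNorm y
  rw [Real.norm_eq_abs] at hφ
  refine ⟨y, ψ, le_antisymm hy ?_, ?_, hψ, ?_⟩
  · by_contra! h
    nlinarith
  · rw [abs_of_nonneg h0]
    nlinarith
  · rw [norm_sub_rev]
    nlinarith [le_abs_self (φ y), norm_nonneg φ]

/-- The Bishop–Phelps–Bollobás theorem for functionals, in the form due to Phelps: the distances of
the point and of the functional are controlled separately, and the functional `ψ` is not
normalised. -/
lemma exists_attaining {X : Type*} [NormedAddCommGroup X] [NormedSpace ℝ X]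
    [CompleteSpace X] (φ : X →L[ℝ] ℝ) {k : ℝ} (hk : 0 < k) (hkφ : k < ‖φ‖) {x : X}
    (hx : ‖x‖ ≤ 1) :
    ∃ (y : X) (ψ : X →L[ℝ] ℝ), ‖y‖ = 1 ∧ |ψ y| = ‖ψ‖ ∧ ‖ψ - φ‖ ≤ k ∧
      k * ‖x - y‖ ≤ ‖φ‖ - |φ x| := by
  rcases le_total 0 (φ x) with h | h
  · rw [abs_of_nonneg h]
    exact exists_attaining_of_pos φ hk hkφ hx
  · obtain ⟨y, ψ, hy, hψy, hψ, hxy⟩ :=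
      exists_attaining_of_pos (-φ) hk (by rwa [norm_neg]) hx
    refine ⟨y, -ψ, hy, by simpa using hψy, ?_, ?_⟩
    · rw [← norm_neg, neg_sub, sub_neg_eq_add, add_comm]
      simpa using hψ
    · rw [abs_of_nonpos h]
      simpa using hxy

/-- The operator-valued approximation, with `s` the allowed distance and `k = ε / s`. -/
lemma exists_attaining_operator {X Y : Type*} [NormedAddCommGroup X] [NormedSpace ℝ X]
    [CompleteSpace X] [NormedAddCommGroup Y] [NormedSpace ℝ Y]
    {Λ : Type*} {yv : Λ → Y} {yf : Λ → (Y →L[ℝ] ℝ)} {ρ ε s k : ℝ}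
    (hyf : ∀ α, ‖yf α‖ = 1) (h1 : ∀ α, yf α (yv α) = 1)
    (hρ : ∀ α γ, α ≠ γ → |yf α (yv γ)| ≤ ρ)
    (hlub : ∀ v : Y, IsLUB (Set.range fun α => |yf α v|) ‖v‖)
    (hρ0 : 0 ≤ ρ) (hs : 0 < s) (hs1 : s < 1) (hks : k * s = ε) (hk : s * (1 - ρ) = k * (1 + ρ))
    (hk1 : k < 1) {x : X} {T : X →L[ℝ] Y} (hx : ‖x‖ ≤ 1) (hT : ‖T‖ ≤ 1) (hTx : 1 - ε < ‖T x‖) :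
    ∃ (y : X) (F : X →L[ℝ] Y), ‖y‖ = 1 ∧ ‖F y‖ = ‖F‖ ∧ ‖x - y‖ < s ∧ ‖T - F‖ ≤ s := by
  obtain ⟨_, ⟨α, rfl⟩, hα, -⟩ := (hlub (T x)).exists_between hTx
  dsimp only at hα
  let φ : X →L[ℝ] ℝ := (yf α).comp T
  have hcomp : ∀ γ, ‖(yf γ).comp T‖ ≤ 1 := fun γ =>
    ((yf γ).opNorm_comp_le T).trans (by rw [hyf γ, one_mul]; exact hT)
  have hφ1 : ‖φ‖ ≤ 1 := hcomp α
  have hφx : |φ x| ≤ ‖φ‖ := by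
    have := φ.le_opNorm x
    rw [Real.norm_eq_abs] at this
    nlinarith [norm_nonneg φ]
  have hαφ : 1 - ε < |φ x| := hα
  -- if `‖φ‖ < 1`, then `φ` is correspondingly closer to attaining its norm at `x`, and a smaller
  -- perturbation than `k` is enough
  obtain ⟨k₀, hk₀s⟩ : ∃ k₀ : ℝ, k₀ * s = ‖φ‖ - (1 - ε) :=
    ⟨(‖φ‖ - (1 - ε)) / s, div_mul_cancel₀ _ hs.ne'⟩
  have hk₀ : 0 < k₀ := by
    by_contra! h
    nlinarith
  have hk₀k : k₀ + (1 - ‖φ‖) ≤ k := by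
    have : (k - k₀) * s = 1 - ‖φ‖ := by linarith
    have : 0 ≤ k - k₀ := by
      by_contra! h
      nlinarith
    nlinarith
  obtain ⟨y, ψ, hy, hψy, hψ, hxy⟩ := exists_attaining φ hk₀ (by linarith) hx
  have hψn : ‖φ‖ - k₀ ≤ ‖ψ‖ := by
    have := norm_sub_norm_le φ ψ
    rw [norm_sub_rev] at this
    linarith
  have hψ0 : 0 < ‖ψ‖ := by linarith
  have hks' : k ≤ s := by nlinarith
  have hu : 0 ≤ s - k₀ := by linarith
  -- `χ` is `ψ` with its norm increased by `s - k₀`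
  let χ : X →L[ℝ] ℝ := ψ + ((s - k₀) / ‖ψ‖) • ψ
  have hu' : 0 ≤ (s - k₀) / ‖ψ‖ := by positivity
  have hχa : ∀ z, χ z = (1 + (s - k₀) / ‖ψ‖) * ψ z := by
    intro z
    change ψ z + ((s - k₀) / ‖ψ‖) * ψ z = _
    ring
  have hχn : ‖χ‖ = ‖ψ‖ + (s - k₀) := by
    have : χ = (1 + (s - k₀) / ‖ψ‖) • ψ := by ext z; exact hχa z
    rw [this, norm_smul, Real.norm_of_nonneg (by linarith)]
    field_simp
  have hχy : |χ y| = ‖χ‖ := by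
    rw [hχa, abs_mul, hψy, abs_of_nonneg (by linarith), hχn]
    field_simp
  have hχφ : ‖χ - φ‖ ≤ s := by
    have : χ - φ = (ψ - φ) + ((s - k₀) / ‖ψ‖) • ψ := by simp only [χ]; abel
    rw [this]
    refine (norm_add_le _ _).trans ?_
    rw [norm_smul, Real.norm_of_nonneg hu', div_mul_cancel₀ _ hψ0.ne']
    linarith
  have hk0 : 0 ≤ k := by linarith
  let h : X →L[ℝ] ℝ := χ - (1 - k) • φ
  have hh : ‖h‖ ≤ s + k := by
    have : h = (χ - φ) + k • φ := by
      ext z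
      change χ z - (1 - k) * φ z = (χ z - φ z) + k * φ z
      ring
    rw [this]
    refine (norm_add_le _ _).trans ?_
    rw [norm_smul, Real.norm_of_nonneg hk0]
    nlinarith
  let F : X →L[ℝ] Y := (1 - k) • T + h.smulRight (yv α)
  have hFz : ∀ z, F z = (1 - k) • T z + h z • yv α := fun z => rfl
  have hFα : ∀ z, yf α (F z) = χ z := by
    intro z
    rw [hFz, map_add, map_smul, map_smul, h1]
    change (1 - k) * φ z + (χ z - (1 - k) * φ z) * 1 = χ z
    ring
  have hTz : ∀ γ z, |yf γ (T z)| ≤ ‖z‖ := by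
    intro γ z
    have h2 := ((yf γ).comp T).le_opNorm z
    rw [Real.norm_eq_abs] at h2
    exact h2.trans (mul_le_of_le_one_left (norm_nonneg z) (hcomp γ))
  have hhz : ∀ z, |h z| ≤ (s + k) * ‖z‖ := fun z => by
    have := h.le_of_opNorm_le hh z
    rwa [Real.norm_eq_abs] at this
  have hrank : ∀ γ, γ ≠ α → ∀ z, |h z * yf γ (yv α)| ≤ ρ * (s + k) * ‖z‖ := by
    intro γ hγ z
    rw [abs_mul, mul_comm, mul_assoc]
    exact mul_le_mul (hρ γ α hγ) (hhz z) (abs_nonneg _) hρ0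
  have hFle : ‖F‖ ≤ ‖χ‖ := by
    refine F.opNorm_le_bound (norm_nonneg _) fun z => (hlub (F z)).2 ?_
    rintro _ ⟨γ, rfl⟩
    dsimp only
    rcases eq_or_ne γ α with rfl | hγ
    · rw [hFα]
      have := χ.le_opNorm z
      rwa [Real.norm_eq_abs] at this
    · rw [hFz, map_add, map_smul, map_smul, smul_eq_mul, smul_eq_mul]
      have h2 := abs_add_le ((1 - k) * yf γ (T z)) (h z * yf γ (yv α))
      rw [abs_mul (1 - k), abs_of_nonneg (sub_nonneg.2 hk1.le)] at h2
      have h3 := mul_le_mul_of_nonneg_left (hTz γ z) (sub_nonneg.2 hk1.le)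
      have h4 : 1 - k + ρ * (s + k) ≤ ‖χ‖ := by linarith
      have h5 := mul_le_mul_of_nonneg_right h4 (norm_nonneg z)
      linarith [hrank γ hγ z]
  refine ⟨y, F, hy, le_antisymm ?_ ?_, ?_, ?_⟩
  · simpa [hy] using F.le_opNorm y
  · refine hFle.trans ?_
    rw [← hχy, ← hFα]
    exact (hlub (F y)).1 ⟨α, rfl⟩
  · by_contra! hge
    nlinarith
  · refine (T - F).opNorm_le_bound hs.le fun z => (hlub _).2 ?_
    rintro _ ⟨γ, rfl⟩
    dsimp only
    rw [_root_.sub_apply, map_sub]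
    rcases eq_or_ne γ α with rfl | hγ
    · rw [hFα, abs_sub_comm]
      have := (χ - φ).le_of_opNorm_le hχφ z
      rwa [Real.norm_eq_abs] at this
    · rw [hFz, map_add, map_smul, map_smul, smul_eq_mul, smul_eq_mul]
      have h2 := abs_sub (k * yf γ (T z)) (h z * yf γ (yv α))
      rw [abs_mul k, abs_of_nonneg hk0] at h2
      have h3 := mul_le_mul_of_nonneg_left (hTz γ z) hk0
      have h4 : yf γ (T z) - ((1 - k) * yf γ (T z) + h z * yf γ (yv α))
          = k * yf γ (T z) - h z * yf γ (yv α) := by ring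
      have h5 : (k + ρ * (s + k)) * ‖z‖ = s * ‖z‖ := by congr 1; linarith
      rw [h4]
      linarith [hrank γ hγ z]

theorem phiTilde_le_of_propertyBeta
    (X : Type*) [NormedAddCommGroup X] [NormedSpace ℝ X] [CompleteSpace X]
    (Y : Type*) [NormedAddCommGroup Y] [NormedSpace ℝ Y] [CompleteSpace Y] [Nontrivial Y]
    (ρ : ℝ) (hρ : ρ ∈ Set.Ico (0 : ℝ) 1) (hβ : PropertyBeta Y ρ)
    (ε : ℝ) (hε : ε ∈ Set.Ioo (0 : ℝ) 1) :
    PhiTildeS X Y ε ≤ PhiTilde X Y ε ∧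
      PhiTilde X Y ε ≤ min (Real.sqrt ε * Real.sqrt ((1 + ρ) / (1 - ρ))) 1 := by
  obtain ⟨hρ0, hρ1⟩ := hρ
  obtain ⟨hε0, hε1⟩ := hε
  have hbdd : ∀ P : ℝ → Prop, BddBelow {δ : ℝ | 0 < δ ∧ P δ} := fun P => ⟨0, fun δ h => h.1.le⟩
  -- `F = 0` is admissible for every `δ > 1`
  have hone : ∀ δ : ℝ, 1 < δ → ∀ (x : X) (T : X →L[ℝ] Y), ‖x‖ ≤ 1 → ‖T‖ ≤ 1 → 1 - ε < ‖T x‖ →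
      ∃ (y : X) (F : X →L[ℝ] Y), ‖y‖ = 1 ∧ ‖F y‖ = ‖F‖ ∧ ‖x - y‖ < δ ∧ ‖T - F‖ < δ := by
    intro δ hδ x T hx hT hTx
    have hx0 : x ≠ 0 := by
      rintro rfl
      rw [map_zero, norm_zero] at hTx
      linarith
    have hxp : 0 < ‖x‖ := norm_pos_iff.2 hx0
    refine ⟨‖x‖⁻¹ • x, 0, norm_smul_inv_norm hx0, by simp, ?_, ?_⟩
    · have h1 : x - ‖x‖⁻¹ • x = (1 - ‖x‖⁻¹) • x := by rw [sub_smul, one_smul]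
      have h2 : 1 ≤ ‖x‖⁻¹ := (one_le_inv₀ hxp).2 hx
      rw [h1, norm_smul, Real.norm_eq_abs, abs_of_nonpos (by linarith), neg_sub, sub_mul,
        inv_mul_cancel₀ hxp.ne']
      linarith
    · rw [sub_zero]
      linarith
  refine ⟨csInf_le_csInf (hbdd _) ⟨2, by norm_num, hone 2 (by norm_num)⟩
    fun δ h => ⟨h.1, fun x T hx hT => h.2 x T hx.le hT.le⟩, ?_⟩
  refine le_of_forall_gt_imp_ge_of_dense fun δ hδ => ?_
  have hr : 0 < (1 + ρ) / (1 - ρ) := div_pos (by linarith) (by linarith)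
  set s := Real.sqrt ε * Real.sqrt ((1 + ρ) / (1 - ρ)) with hs_def
  have hs : 0 < s := mul_pos (Real.sqrt_pos.2 hε0) (Real.sqrt_pos.2 hr)
  have hδ0 : 0 < δ := (lt_min hs one_pos).trans hδ
  refine csInf_le (hbdd _) ⟨hδ0, fun x T hx hT hTx => ?_⟩
  rcases le_or_gt 1 s with h1s | hs1
  · rw [min_eq_right h1s] at hδ
    exact hone δ hδ x T hx hT hTx
  rw [min_eq_left hs1.le] at hδ
  obtain ⟨Λ, yv, yf, -, hyf, h1, hρ, hlub⟩ := hβ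
  have hs2 : s * s * (1 - ρ) = ε * (1 + ρ) := by
    have h2 : s * s = ε * ((1 + ρ) / (1 - ρ)) := by
      rw [hs_def, mul_mul_mul_comm, Real.mul_self_sqrt hε0.le, Real.mul_self_sqrt hr.le]
    rw [h2, mul_assoc, div_mul_cancel₀ _ (by linarith)]
  have hks : ε / s * s = ε := div_mul_cancel₀ _ hs.ne'
  have hk : s * (1 - ρ) = ε / s * (1 + ρ) := by
    field_simp
    linarith
  have hk1 : ε / s < 1 := by
    have : 0 ≤ ε / s := by positivity
    nlinarith
  obtain ⟨y, F, hy, hF, hxy, hTF⟩ :=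
    exists_attaining_operator hyf h1 hρ hlub hρ0 hs hs1 hks hk hk1 hx hT hTx
  exact ⟨y, F, hy, hF, hxy.trans hδ, hTF.trans_lt hδ⟩
end
end

section
/- For every ε ∈ (0,1), the modified Bishop–Phelps–Bollobás moduli of the pair (ℓ₁⁽²⁾, ℝ) satisfy Φ̃^S(ℓ₁⁽²⁾, ℝ, ε) = Φ̃(ℓ₁⁽²⁾, ℝ, ε) = √ε. -/
/-!
Identify an operator `ℓ₁⁽²⁾ → ℝ` with its coefficient pair `(s, t)`; its norm is `max |s| |t|`.
With `r = √ε`, both moduli are minima, attained at `δ = r`.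

*Upper bound.* By symmetry let `x = (a, b)` with `a, b ≥ 0`, `T = (s, t)` with `t ≤ s` and
`a s + b t > 1 - r²`. If `-s ≤ t` and `s - t < 2r`, replace both coefficients by their mean, whose
norm is attained at every positive unit vector. If `-s ≤ t` and `2r ≤ s - t`, then `T` itself
attains its norm at `e₁`, and the near-attainment forces `‖x - e₁‖ < r`. If `t < -s`, the functional
`((s - t)/2, -(s - t)/2)` attains its norm at `e₁`, and `e₁` is within `ε` of `x`
(`exists_approx_of_nonneg_of_le`).

*Lower bound.* For `δ < ρ < r` take `x = (1 - ρ/2, ρ/2)` and `T = (1, 1 - 2ρ)`. A functional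
`(u, v)` within `δ` of `T` has `v < u` and `0 < u`, so it does not attain its norm at a
vector with two positive coordinates; every other unit vector is at distance at least `ρ` from `x`
(`le_dist_of_attains`).
-/

noncomputable section

/-- The two-dimensional real `ℓ₁` space. -/
abbrev L12 : Type := PiLp 1 (fun _ : Fin 2 => ℝ)

/-- Coordinate form of the approximation property: the point `(a, b)` and the functional `(s, t)`
are within `r` of a unit vector `(p, q)` and a functional `(u, v)` attaining its norm at it. -/
def Approx (r a b s t : ℝ) : Prop :=
  ∃ p q u v : ℝ, |p| + |q| = 1 ∧ |u * p + v * q| = max |u| |v| ∧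
    |a - p| + |b - q| < r ∧ max |s - u| |t - v| < r

lemma Approx.swap {r a b s t : ℝ} (h : Approx r a b s t) : Approx r b a t s := by
  obtain ⟨p, q, u, v, h1, h2, h3, h4⟩ := h
  refine ⟨q, p, v, u, by linarith, ?_, by linarith, by rwa [max_comm]⟩
  rw [max_comm, ← h2, add_comm]

lemma Approx.neg_functional {r a b s t : ℝ} (h : Approx r a b (-s) (-t)) : Approx r a b s t := by
  obtain ⟨p, q, u, v, h1, h2, h3, h4⟩ := h
  refine ⟨p, q, -u, -v, h1, ?_, h3, ?_⟩
  · rw [abs_neg, abs_neg, ← h2, ← abs_neg]; congr 1; ring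
  · rw [← abs_neg, ← abs_neg (t - -v)]
    convert h4 using 3 <;> ring

lemma Approx.neg_fst {r a b s t : ℝ} (h : Approx r (-a) b (-s) t) : Approx r a b s t := by
  obtain ⟨p, q, u, v, h1, h2, h3, h4⟩ := h
  refine ⟨-p, q, -u, v, by rwa [abs_neg], ?_, ?_, ?_⟩
  · rw [abs_neg, ← h2]; congr 1; ring
  · rw [← abs_neg]; convert h3 using 3; ring
  · rw [← abs_neg]; convert h4 using 3; ring

lemma exists_approx_of_nonneg_of_le {r a b s t : ℝ} (hr : 0 < r) (hr1 : r < 1)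
    (ha : 0 ≤ a) (hb : 0 ≤ b) (hab : a + b ≤ 1) (hs : |s| ≤ 1) (ht : |t| ≤ 1) (hts : t ≤ s)
    (h : 1 - r ^ 2 < s * a + t * b) : Approx r a b s t := by
  obtain ⟨hs1, hs2⟩ := abs_le.1 hs
  obtain ⟨ht1, ht2⟩ := abs_le.1 ht
  have hr2 : r ^ 2 < r := by nlinarith
  by_cases hc : -s ≤ t
  · by_cases hd : s - t < 2 * r
    · refine ⟨1 - b, b, (s + t) / 2, (s + t) / 2, ?_, ?_, ?_, ?_⟩
      · rw [abs_of_nonneg (by linarith), abs_of_nonneg hb]; ring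
      · rw [max_self]; congr 1; ring
      · rw [sub_self, abs_zero, add_zero, abs_lt]
        constructor <;> nlinarith
      · rw [max_lt_iff, abs_lt, abs_lt]
        refine ⟨⟨?_, ?_⟩, ?_, ?_⟩ <;> linarith
    · refine ⟨1, 0, s, t, by simp, ?_, ?_, by simpa using hr⟩
      · rw [mul_one, mul_zero, add_zero, max_eq_left]
        rw [abs_of_nonneg (by linarith : 0 ≤ s), abs_le]
        exact ⟨hc, hts⟩
      · rw [abs_of_nonpos (by linarith), sub_zero, abs_of_nonneg hb]
        have h1 : s * (a + b) ≤ a + b := by nlinarith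
        have h2 : 2 * r * b ≤ (s - t) * b := mul_le_mul_of_nonneg_right (by linarith) hb
        have h3 : 2 * r * b < r ^ 2 - (1 - a - b) := by nlinarith
        have h4 : r * (1 - a - b) ≤ 1 - a - b := by nlinarith
        have h5 : r * (1 - a + b) < r * r := by nlinarith
        linarith [lt_of_mul_lt_mul_left h5 hr.le]
  · push Not at hc
    have hs0 : 0 < s := by
      by_contra hs0
      nlinarith
    -- Since `t < -s`, both `s` and `a - b` exceed `1 - r ^ 2`.
    have h1 : 1 - r ^ 2 < s * (a - b) := by nlinarith
    have h2 : 1 - r ^ 2 < a - b := by nlinarith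
    have h3 : 1 - r ^ 2 < s := by nlinarith
    refine ⟨1, 0, (s - t) / 2, -((s - t) / 2), by simp, by simp, ?_, ?_⟩
    · rw [abs_of_nonpos (by linarith), sub_zero, abs_of_nonneg hb]
      linarith
    · rw [max_lt_iff, abs_lt, abs_lt]
      refine ⟨⟨?_, ?_⟩, ?_, ?_⟩ <;> linarith

lemma exists_approx {r a b s t : ℝ} (hr : 0 < r) (hr1 : r < 1)
    (hab : |a| + |b| ≤ 1) (hs : |s| ≤ 1) (ht : |t| ≤ 1)
    (h : 1 - r ^ 2 < |s * a + t * b|) : Approx r a b s t := by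
  wlog ha : 0 ≤ a generalizing a s
  · refine (this (a := -a) (s := -s) ?_ ?_ ?_ ?_).neg_fst
    · rwa [abs_neg]
    · rwa [abs_neg]
    · rwa [neg_mul_neg]
    · linarith
  wlog hb : 0 ≤ b generalizing b t
  · refine (this (b := -b) (t := -t) ?_ ?_ ?_ ?_).swap.neg_fst.swap
    · rwa [abs_neg]
    · rwa [abs_neg]
    · rwa [neg_mul_neg]
    · linarith
  wlog h0 : 0 ≤ s * a + t * b generalizing s t
  · refine (this (s := -s) (t := -t) ?_ ?_ ?_ ?_).neg_functional
    · rwa [abs_neg]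
    · rwa [abs_neg]
    · rw [← abs_neg]; convert h using 2; ring
    · linarith
  rw [abs_of_nonneg h0] at h
  rw [abs_of_nonneg ha, abs_of_nonneg hb] at hab
  rcases le_total t s with hts | hts
  · exact exists_approx_of_nonneg_of_le hr hr1 ha hb hab hs ht hts h
  · exact (exists_approx_of_nonneg_of_le hr hr1 hb ha (by linarith) ht hs hts
      (by linarith)).swap

/-- If `v < u` and `0 < u`, then `(u, v)` attains its norm only at unit vectors having a coordinate
`≤ 0`, and these are at distance at least `2 b` from `(1 - b, b)`. -/
lemma le_dist_of_attains {b p q u v : ℝ} (hb1 : b ≤ 1 / 2) (hu : 0 < u)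
    (hvu : v < u) (hpq : |p| + |q| = 1) (hatt : |u * p + v * q| = max |u| |v|) :
    2 * b ≤ |1 - b - p| + |b - q| := by
  have a1 := le_abs_self (1 - b - p)
  have a2 := neg_le_abs (1 - b - p)
  have a3 := le_abs_self (b - q)
  have a4 := neg_le_abs (b - q)
  rcases le_or_gt p 0 with hp | hp
  · rw [abs_of_nonpos hp] at hpq
    rcases le_or_gt q 0 with hq | hq
    · rw [abs_of_nonpos hq] at hpq; linarith
    · rw [abs_of_pos hq] at hpq; linarith
  · rw [abs_of_pos hp] at hpq
    rcases le_or_gt q 0 with hq | hq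
    · rw [abs_of_nonpos hq] at hpq; linarith
    · rw [abs_of_pos hq] at hpq
      have hm1 : u ≤ max |u| |v| := (le_abs_self u).trans (le_max_left _ _)
      have hm2 : -v ≤ max |u| |v| := (neg_le_abs v).trans (le_max_right _ _)
      have : |u * p + v * q| < max |u| |v| := by
        rw [abs_lt]
        constructor <;> nlinarith
      exact absurd hatt this.ne

/-- The functional on `ℓ₁⁽²⁾` with coefficients `u` and `v`. -/
def coeffFunctional (u v : ℝ) : L12 →L[ℝ] ℝ :=
  u • PiLp.proj 1 (fun _ : Fin 2 => ℝ) 0 + v • PiLp.proj 1 (fun _ : Fin 2 => ℝ) 1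

lemma coeffFunctional_apply (u v : ℝ) (x : L12) : coeffFunctional u v x = u * x 0 + v * x 1 := by
  simp [coeffFunctional]

lemma L12_norm (x : L12) : ‖x‖ = |x 0| + |x 1| := by
  simp [PiLp.norm_eq_of_L1]

lemma coeffFunctional_norm (u v : ℝ) : ‖coeffFunctional u v‖ = max |u| |v| := by
  apply le_antisymm
  · refine ContinuousLinearMap.opNorm_le_bound _ (by positivity) fun x => ?_
    rw [coeffFunctional_apply, L12_norm, Real.norm_eq_abs]
    calc |u * x 0 + v * x 1| ≤ |u| * |x 0| + |v| * |x 1| := by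
          rw [← abs_mul, ← abs_mul]; exact abs_add_le _ _
      _ ≤ max |u| |v| * |x 0| + max |u| |v| * |x 1| := by
          gcongr
          · exact le_max_left _ _
          · exact le_max_right _ _
      _ = _ := by ring
  · refine max_le ?_ ?_
    · have := (coeffFunctional u v).le_opNorm (WithLp.toLp 1 ![1, 0])
      simpa [coeffFunctional_apply, L12_norm] using this
    · have := (coeffFunctional u v).le_opNorm (WithLp.toLp 1 ![0, 1])
      simpa [coeffFunctional_apply, L12_norm] using this

lemma exists_eq_coeffFunctional (T : L12 →L[ℝ] ℝ) : ∃ u v, T = coeffFunctional u v := by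
  refine ⟨T (WithLp.toLp 1 ![1, 0]), T (WithLp.toLp 1 ![0, 1]), ?_⟩
  ext x
  have hx : x = x 0 • (WithLp.toLp 1 ![1, 0] : L12) + x 1 • (WithLp.toLp 1 ![0, 1] : L12) := by
    ext i; fin_cases i <;> simp
  rw [coeffFunctional_apply]
  conv_lhs => rw [hx]
  simp only [map_add, map_smul, smul_eq_mul]
  ring

lemma coeffFunctional_sub (s t u v : ℝ) :
    coeffFunctional s t - coeffFunctional u v = coeffFunctional (s - u) (t - v) := by
  ext x
  simp only [sub_apply, coeffFunctional_apply]
  ring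

theorem phiTilde_l1_real :
    ∀ ε : ℝ, ε ∈ Set.Ioo (0 : ℝ) 1 →
      PhiTildeS L12 ℝ ε = Real.sqrt ε ∧ PhiTilde L12 ℝ ε = Real.sqrt ε := by
  rintro ε ⟨hε0, hε1⟩
  have hr : 0 < √ε := Real.sqrt_pos.2 hε0
  have hr1 : √ε < 1 := by rw [Real.sqrt_lt' one_pos]; simpa using hε1
  have hsq : √ε ^ 2 = ε := Real.sq_sqrt hε0.le
  have upper : ∀ (x : L12) (T : L12 →L[ℝ] ℝ), ‖x‖ ≤ 1 → ‖T‖ ≤ 1 → 1 - ε < ‖T x‖ →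
      ∃ (y : L12) (F : L12 →L[ℝ] ℝ), ‖y‖ = 1 ∧ ‖F y‖ = ‖F‖ ∧ ‖x - y‖ < √ε ∧ ‖T - F‖ < √ε := by
    intro x T hx hT hTx
    obtain ⟨s, t, rfl⟩ := exists_eq_coeffFunctional T
    rw [coeffFunctional_norm, max_le_iff] at hT
    rw [L12_norm] at hx
    rw [coeffFunctional_apply, Real.norm_eq_abs, ← hsq] at hTx
    obtain ⟨p, q, u, v, h1, h2, h3, h4⟩ := exists_approx hr hr1 hx hT.1 hT.2 hTx
    refine ⟨WithLp.toLp 1 ![p, q], coeffFunctional u v, ?_, ?_, ?_, ?_⟩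
    · simpa [L12_norm] using h1
    · simpa [coeffFunctional_norm, coeffFunctional_apply] using h2
    · simpa [L12_norm] using h3
    · rwa [coeffFunctional_sub, coeffFunctional_norm]
  have lower : ∀ δ : ℝ, 0 < δ →
      (∀ (x : L12) (T : L12 →L[ℝ] ℝ), ‖x‖ = 1 → ‖T‖ = 1 → 1 - ε < ‖T x‖ →
        ∃ (y : L12) (F : L12 →L[ℝ] ℝ), ‖y‖ = 1 ∧ ‖F y‖ = ‖F‖ ∧ ‖x - y‖ < δ ∧ ‖T - F‖ < δ) →
      √ε ≤ δ := by
    intro δ hδ H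
    by_contra! hlt
    obtain ⟨ρ, hδρ, hρr⟩ := exists_between hlt
    have hx : ‖(WithLp.toLp 1 ![1 - ρ / 2, ρ / 2] : L12)‖ = 1 := by
      simp only [L12_norm, Matrix.cons_val_zero, Matrix.cons_val_one]
      rw [abs_of_nonneg (by linarith), abs_of_nonneg (by linarith)]
      ring
    have hT : ‖coeffFunctional 1 (1 - 2 * ρ)‖ = 1 := by
      rw [coeffFunctional_norm, abs_one, max_eq_left]
      rw [abs_le]
      constructor <;> linarith
    have hTx : 1 - ε <
        ‖coeffFunctional 1 (1 - 2 * ρ) (WithLp.toLp 1 ![1 - ρ / 2, ρ / 2] : L12)‖ := by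
      simp only [coeffFunctional_apply, Matrix.cons_val_zero, Matrix.cons_val_one]
      refine lt_of_lt_of_le ?_ (le_abs_self _)
      nlinarith
    obtain ⟨y, F, hy, hFy, hxy, hTF⟩ := H _ _ hx hT hTx
    obtain ⟨u, v, rfl⟩ := exists_eq_coeffFunctional F
    rw [coeffFunctional_sub, coeffFunctional_norm, max_lt_iff, abs_lt, abs_lt] at hTF
    obtain ⟨⟨h1, h2⟩, h3, h4⟩ := hTF
    rw [coeffFunctional_norm, coeffFunctional_apply, Real.norm_eq_abs] at hFy
    rw [L12_norm] at hy
    have := le_dist_of_attains (b := ρ / 2) (by linarith) (by linarith) (by linarith) hy hFy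
    simp [L12_norm] at hxy
    linarith
  refine ⟨IsLeast.csInf_eq ⟨⟨hr, fun x T hx hT => upper x T hx.le hT.le⟩, fun δ hδ => ?_⟩,
    IsLeast.csInf_eq ⟨⟨hr, upper⟩, fun δ hδ => ?_⟩⟩
  · exact lower δ hδ.1 hδ.2
  · exact lower δ hδ.1 fun x T hx hT => hδ.2 x T hx.le hT.le
end
end
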